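/- arXiv:1807.06307 — 6 statements merged into one kernel-verified Lean document; each statement's English description precedes it below -/
import Mathlib

section
/- Let k ≥ 1 be an integer and let μ, λ be real numbers. Define, for a smooth function h on (0, ε₀), the operator (ℒh)(r) = μ r² h(r) − (1 − λr²/2)² · (r d/dr)² h(r) + 2(k+1)(1 − λ²r⁴/4) · (r d/dr) h(r), where (r d/dr) h(r) = r h'(r). Then there exist unique real numbers a₁, …, a_k and c such that the function h(r) = 1 + Σ_{l=1}^{k} a_l r^{2l} + c · r^{2k+2} log r satisfies (ℒh)(r) = O(r^{2k+3} log r) as r → 0⁺. -/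
open Real Filter Asymptotics

/-- The operator `r d/dr`. -/
noncomputable def rDeriv (h : ℝ → ℝ) : ℝ → ℝ := fun r => r * deriv h r

/-- The scalar reduction of the Jacobi operator `J⁺` along an eigendirection with
eigenvalue `μ`:
`(ℒh)(r) = μ r² h(r) − (1 − λr²/2)² (r d/dr)² h(r) + 2(k+1)(1 − λ²r⁴/4)(r d/dr) h(r)`. -/
noncomputable def scalarJacobiOp (k : ℕ) (μ lam : ℝ) (h : ℝ → ℝ) : ℝ → ℝ := fun r =>
  μ * r ^ 2 * h r - (1 - lam * r ^ 2 / 2) ^ 2 * rDeriv (rDeriv h) r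
    + 2 * ((k : ℝ) + 1) * (1 - lam ^ 2 * r ^ 4 / 4) * rDeriv h r

/-- The ansatz `h(r) = 1 + Σ_{l=1}^{k} a_l r^{2l} + c r^{2k+2} log r`. -/
noncomputable def ansatz (k : ℕ) (a : Fin k → ℝ) (c : ℝ) : ℝ → ℝ := fun r =>
  1 + ∑ l : Fin k, a l * r ^ (2 * ((l : ℕ) + 1)) + c * r ^ (2 * k + 2) * Real.log r

lemma aux_one_isBigO_log : (fun _ : ℝ => (1:ℝ)) =O[nhdsWithin 0 (Set.Ioi 0)] Real.log := by
  have h := Real.tendsto_log_nhdsGT_zero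
  have : ∀ᶠ r in nhdsWithin (0:ℝ) (Set.Ioi 0), Real.log r ≤ -1 := h.eventually_le_atBot (-1)
  apply IsBigO.of_bound 1
  filter_upwards [this] with r hr
  rw [Real.norm_eq_abs, Real.norm_eq_abs, abs_of_nonpos (by linarith : Real.log r ≤ 0)]
  simp; linarith

lemma aux_mul_log : Tendsto (fun r : ℝ => r * Real.log r) (nhdsWithin 0 (Set.Ioi 0)) (nhds 0) := by
  have := (Real.continuous_mul_log.tendsto 0).mono_left
    (nhdsWithin_le_nhds (s := Set.Ioi (0:ℝ)))
  simpa using this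

lemma aux_coeff (C : ℕ → ℝ) (n : ℕ) :
    ((fun r : ℝ => ∑ j ∈ Finset.range (n+1), C j * r ^ (2*j))
      =O[nhdsWithin 0 (Set.Ioi 0)] (fun r : ℝ => r ^ (2*n+1) * Real.log r)) →
    ∀ j ≤ n, C j = 0 := by
  have key : ∀ (n : ℕ) (c : ℝ), ((fun r : ℝ => c * r ^ (2*n))
      =O[nhdsWithin 0 (Set.Ioi 0)] (fun r : ℝ => r ^ (2*n+1) * Real.log r)) → c = 0 := by
    intro n c h
    have h1 : (fun _ : ℝ => c) =O[nhdsWithin 0 (Set.Ioi 0)] (fun r : ℝ => r * Real.log r) := by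
      have h2 := h.mul (isBigO_refl (fun r : ℝ => (r ^ (2*n))⁻¹) (nhdsWithin 0 (Set.Ioi 0)))
      refine h2.congr' ?_ ?_
      · filter_upwards [self_mem_nhdsWithin] with r hr
        have : r ≠ 0 := ne_of_gt hr
        field_simp
      · filter_upwards [self_mem_nhdsWithin] with r hr
        have : r ≠ 0 := ne_of_gt hr
        field_simp
        ring
    have h3 := h1.trans_tendsto aux_mul_log
    exact tendsto_nhds_unique tendsto_const_nhds h3
  induction n with
  | zero =>
    intro h j hj
    obtain rfl : j = 0 := by omega
    apply key 0
    simpa using h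
  | succ n ih =>
    intro h
    have hlow : ∀ j ≤ n, C j = 0 := by
      apply ih
      have a1 : (fun r : ℝ => r ^ (2*(n+1)+1) * Real.log r) =O[nhdsWithin 0 (Set.Ioi 0)]
          (fun r : ℝ => r ^ (2*n+1) * Real.log r) := by
        have : (fun r : ℝ => r ^ 2) =O[nhdsWithin 0 (Set.Ioi 0)] (fun _ : ℝ => (1:ℝ)) :=
          ((continuous_pow 2).tendsto (0:ℝ)).mono_left nhdsWithin_le_nhds |>.isBigO_one ℝ
        refine (this.mul (isBigO_refl (fun r : ℝ => r ^ (2*n+1) * Real.log r) _)).congr ?_ ?_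
        · intro r; ring
        · intro r; ring
      have a2 : (fun r : ℝ => C (n+1) * r ^ (2*(n+1))) =O[nhdsWithin 0 (Set.Ioi 0)]
          (fun r : ℝ => r ^ (2*n+1) * Real.log r) := by
        have : (fun r : ℝ => C (n+1) * r) =O[nhdsWithin 0 (Set.Ioi 0)] (fun _ : ℝ => (1:ℝ)) :=
          (((continuous_const.mul continuous_id).tendsto (0:ℝ)).mono_left
            nhdsWithin_le_nhds).isBigO_one ℝ
        refine ((this.trans aux_one_isBigO_log).mul
          (isBigO_refl (fun r : ℝ => r ^ (2*n+1)) _)).congr ?_ ?_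
        · intro r; ring
        · intro r; ring
      refine ((h.trans a1).sub a2).congr_left ?_
      intro r
      rw [Finset.sum_range_succ _ (n+1)]; ring
    intro j hj
    rcases Nat.lt_or_ge j (n+1) with hlt | hge
    · exact hlow j (by omega)
    · obtain rfl : j = n+1 := by omega
      apply key (n+1)
      refine h.congr_left ?_
      intro r
      rw [Finset.sum_range_succ, Finset.sum_eq_zero, zero_add]
      intro i hi
      rw [hlow i (by have := Finset.mem_range.1 hi; omega), zero_mul]

noncomputable def auxG (n m : ℕ) (α : ℕ → ℝ) (β γ : ℝ) : ℝ → ℝ := fun r =>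
  ∑ j ∈ Finset.range n, α j * r ^ (2*j) + β * r ^ m * Real.log r + γ * r ^ m

lemma aux_rDeriv_G (n m : ℕ) (α : ℕ → ℝ) (β γ : ℝ) (r : ℝ) (hr : 0 < r) :
    rDeriv (auxG n m α β γ) r = auxG n m (fun j => 2 * j * α j) (m * β) (m * γ + β) r := by
  have hp : ∀ q : ℕ, r * ((q:ℝ) * r ^ (q-1)) = q * r ^ q := by
    intro q
    cases q with
    | zero => simp
    | succ q => simp only [Nat.add_sub_cancel]; ring
  have h1 : HasDerivAt (fun r : ℝ => ∑ j ∈ Finset.range n, α j * r ^ (2*j))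
      (∑ j ∈ Finset.range n, α j * (((2*j : ℕ) : ℝ) * r ^ (2*j-1))) r :=
    HasDerivAt.fun_sum fun j _ => (hasDerivAt_pow (2*j) r).const_mul (α j)
  have hm := hasDerivAt_pow m r
  have h2 := (hm.const_mul β).mul (Real.hasDerivAt_log hr.ne')
  have h3 := (h1.add h2).add (hm.const_mul γ)
  have h4 : deriv (auxG n m α β γ) r = _ := h3.deriv
  unfold rDeriv
  rw [h4, mul_add, mul_add, Finset.mul_sum]
  unfold auxG
  have e1 : ∀ j, r * (α j * (((2*j : ℕ) : ℝ) * r ^ (2*j-1))) = 2 * j * α j * r ^ (2*j) := by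
    intro j
    have := hp (2*j)
    push_cast at this ⊢
    linear_combination (α j) * this
  rw [Finset.sum_congr rfl fun j _ => e1 j]
  have hi : r * r⁻¹ = 1 := mul_inv_cancel₀ hr.ne'
  linear_combination (β * Real.log r + γ) * hp m + β * r ^ m * hi

lemma aux_rDeriv_congr {f g : ℝ → ℝ} (h : ∀ r, 0 < r → f r = g r) (r : ℝ) (hr : 0 < r) :
    rDeriv f r = rDeriv g r := by
  unfold rDeriv
  rw [Filter.EventuallyEq.deriv_eq]
  filter_upwards [Ioi_mem_nhds hr] with x hx using h x hx

noncomputable def auxd (k j : ℕ) : ℝ :=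
  if j ≤ k then 4 * j * (k + 1 - j) else -(2 * k + 2)

noncomputable def auxe (μ lam : ℝ) (j : ℕ) : ℝ := μ + lam * (2 * j) ^ 2

noncomputable def auxf (k : ℕ) (lam : ℝ) (j : ℕ) : ℝ :=
  - (lam ^ 2 / 4) * (2 * j) ^ 2 - 2 * (k + 1) * (lam ^ 2 / 4) * (2 * j)

noncomputable def auxC (k : ℕ) (μ lam : ℝ) (b : ℕ → ℝ) : ℕ → ℝ
  | 0 => auxd k 0 * b 0
  | 1 => auxd k 1 * b 1 + auxe μ lam 0 * b 0
  | (j+2) => auxd k (j+2) * b (j+2) + auxe μ lam (j+1) * b (j+1) + auxf k lam j * b j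

noncomputable def auxg (k : ℕ) (μ lam : ℝ) : ℕ → ℝ
  | 0 => 1
  | 1 => - (auxe μ lam 0) / auxd k 1
  | (j+2) => -(auxe μ lam (j+1) * auxg k μ lam (j+1) + auxf k lam j * auxg k μ lam j)
      / auxd k (j+2)

lemma auxd_ne (k j : ℕ) (hj : 1 ≤ j) : auxd k j ≠ 0 := by
  unfold auxd
  split_ifs with h
  · have h1 : (1:ℝ) ≤ j := by exact_mod_cast hj
    have h2 : (j:ℝ) ≤ k := by exact_mod_cast h
    have : 0 < 4 * (j:ℝ) * (k + 1 - j) := by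
      apply mul_pos <;> linarith
    exact this.ne'
  · have : (0:ℝ) ≤ k := k.cast_nonneg
    linarith

lemma aux_C_g (k : ℕ) (μ lam : ℝ) (j : ℕ) : auxC k μ lam (auxg k μ lam) j = 0 := by
  match j with
  | 0 => simp [auxC, auxd]
  | 1 =>
    have := auxd_ne k 1 le_rfl
    simp only [auxC, auxg]; field_simp; ring
  | (j+2) =>
    have := auxd_ne k (j+2) (by omega)
    simp only [auxC, auxg]; field_simp; ring

lemma aux_unique (k : ℕ) (μ lam : ℝ) (b : ℕ → ℝ) (hb : b 0 = 1) (n : ℕ)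
    (h : ∀ j ≤ n, auxC k μ lam b j = 0) : ∀ j ≤ n, b j = auxg k μ lam j := by
  intro j
  induction j using Nat.strong_induction_on with
  | _ j ih =>
    intro hj
    have hC := h j hj
    match j, ih, hj, hC with
    | 0, _, _, _ => simp [auxg, hb]
    | 1, _, _, hC =>
      have := auxd_ne k 1 le_rfl
      simp only [auxC, auxg, hb] at hC ⊢
      rw [eq_div_iff this]; linarith
    | (j+2), ih, hj, hC =>
      have := auxd_ne k (j+2) (by omega)
      have i1 := ih (j+1) (by omega) (by omega)
      have i2 := ih j (by omega) (by omega)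
      simp only [auxC, auxg] at hC ⊢
      rw [i1, i2] at hC
      rw [eq_div_iff this]; linarith

lemma aux_sum (k : ℕ) (μ lam : ℝ) (b : ℕ → ℝ) (r : ℝ) (n : ℕ) :
    ∑ j ∈ Finset.range (n+2), (auxd k j * b j * r ^ (2*j) + auxe μ lam j * b j * r ^ (2*j+2)
        + auxf k lam j * b j * r ^ (2*j+4))
      = ∑ j ∈ Finset.range (n+2), auxC k μ lam b j * r ^ (2*j)
        + (auxe μ lam (n+1) * b (n+1) + auxf k lam n * b n) * r ^ (2*n+4)
        + auxf k lam (n+1) * b (n+1) * r ^ (2*n+6) := by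
  induction n with
  | zero =>
    simp only [Finset.sum_range_succ, Finset.sum_range_zero, auxC]; ring
  | succ n ih =>
    rw [Finset.sum_range_succ, ih, Finset.sum_range_succ _ (n+2)]
    simp only [auxC]; ring

lemma aux_expand (k : ℕ) (hk : 1 ≤ k) (μ lam : ℝ) (b : ℕ → ℝ) (hb : b 0 = 1) :
    ∃ A B A' B' : ℝ, ∀ r : ℝ, 0 < r →
      scalarJacobiOp k μ lam (ansatz k (fun l => b (l+1)) (b (k+1))) r =
        ∑ j ∈ Finset.range (k+2), auxC k μ lam b j * r ^ (2*j)
        + r ^ (2*k+3) * (r * (A + A' * r ^ 2) + r * (B + B' * r ^ 2) * Real.log r) := by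
  obtain ⟨n, rfl⟩ : ∃ n, k = n + 1 := ⟨k-1, by omega⟩
  set k := n + 1 with hkdef
  have h0 : ∀ r, ansatz k (fun l => b (l+1)) (b (k+1)) r
      = auxG (k+1) (2*k+2) b (b (k+1)) 0 r := by
    intro r
    unfold ansatz auxG
    rw [Finset.sum_range_succ', Fin.sum_univ_eq_sum_range (fun l => b (l+1) * r ^ (2*(l+1))) k, hb]
    ring
  have h1 : ∀ r, 0 < r → rDeriv (ansatz k (fun l => b (l+1)) (b (k+1))) r = _ := fun r hr =>
    (aux_rDeriv_congr (fun r _ => h0 r) r hr).trans (aux_rDeriv_G _ _ _ _ _ r hr)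
  have h2 : ∀ r, 0 < r → rDeriv (rDeriv (ansatz k (fun l => b (l+1)) (b (k+1)))) r = _ :=
    fun r hr => (aux_rDeriv_congr h1 r hr).trans (aux_rDeriv_G _ _ _ _ _ r hr)
  set c := b (k+1) with hc
  refine ⟨lam * (2 * (2*k+2)) * c + auxf k lam k * b k,
    (μ + lam * (2*k+2)^2) * c,
    - (lam^2/4) * (2 * (2*k+2)) * c - 2*(k+1) * (lam^2/4) * c,
    (- (lam^2/4) * (2*k+2)^2 - 2*(k+1) * (lam^2/4) * (2*k+2)) * c, ?_⟩
  intro r hr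
  unfold scalarJacobiOp
  rw [h1 r hr, h2 r hr, h0 r]
  unfold auxG
  have hs := aux_sum k μ lam b r n
  have hC : auxC k μ lam b (k+1) = -(2*k+2) * c + (auxe μ lam k * b k + auxf k lam n * b n) := by
    have : auxd k (n+2) = -(2*k+2) := by
      unfold auxd; rw [if_neg (by omega)]
    simp only [hkdef, auxC] at this ⊢
    rw [this, hc]; ring
  have hterm : ∑ j ∈ Finset.range (k+1), (auxd k j * b j * r ^ (2*j)
      + auxe μ lam j * b j * r ^ (2*j+2) + auxf k lam j * b j * r ^ (2*j+4))
      = μ * r^2 * ∑ j ∈ Finset.range (k+1), b j * r ^ (2*j)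
      - (1 - lam * r ^ 2 / 2) ^ 2 *
        ∑ j ∈ Finset.range (k+1), 2 * (j:ℝ) * (2 * j * b j) * r ^ (2*j)
      + 2 * ((k : ℝ) + 1) * (1 - lam ^ 2 * r ^ 4 / 4) *
        ∑ j ∈ Finset.range (k+1), 2 * (j:ℝ) * b j * r ^ (2*j) := by
    rw [Finset.mul_sum, Finset.mul_sum, Finset.mul_sum, ← Finset.sum_sub_distrib,
      ← Finset.sum_add_distrib]
    apply Finset.sum_congr rfl
    intro j hj
    have : j ≤ k := by have := Finset.mem_range.1 hj; omega
    unfold auxd auxe auxf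
    rw [if_pos this]; ring
  rw [Finset.sum_range_succ _ (k+1), hC]
  have hs' := hterm.symm.trans hs
  have e1 : r ^ (2*n+4) = r ^ (2*k+2) := by congr 1
  have e2 : r ^ (2*n+6) = r ^ (2*k+2) * r^2 := by rw [← pow_add]; congr 1
  rw [e1, e2] at hs'
  have e3 : n + 2 = k + 1 := rfl
  rw [e3] at hs'
  have e4 : n + 1 = k := rfl
  rw [e4] at hs'
  clear_value k c
  push_cast
  have e5 : r ^ (2*k+3) = r ^ (2*k+2) * r := by ring
  have e6 : r ^ (2*(k+1)) = r ^ (2*k+2) := by ring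
  rw [e5, e6]
  generalize r ^ (2*k+2) = R at *
  linear_combination hs'

lemma aux_rem (A B A' B' : ℝ) (m : ℕ) :
    (fun r : ℝ => r ^ m * (r * (A + A' * r ^ 2) + r * (B + B' * r ^ 2) * Real.log r))
      =O[nhdsWithin 0 (Set.Ioi 0)] (fun r : ℝ => r ^ m * Real.log r) := by
  have hq : ∀ A A' : ℝ, (fun r : ℝ => r * (A + A' * r ^ 2))
      =O[nhdsWithin 0 (Set.Ioi 0)] (fun _ : ℝ => (1:ℝ)) := by
    intro A A'
    have hc : Continuous (fun r : ℝ => r * (A + A' * r ^ 2)) := by fun_prop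
    exact ((hc.tendsto 0).mono_left nhdsWithin_le_nhds).isBigO_one ℝ
  refine (isBigO_refl _ _).mul (((hq A A').trans aux_one_isBigO_log).add ?_)
  simpa using (hq B B').mul (isBigO_refl Real.log _)

lemma aux_iff (k : ℕ) (hk : 1 ≤ k) (μ lam : ℝ) (b : ℕ → ℝ) (hb : b 0 = 1) :
    ((scalarJacobiOp k μ lam (ansatz k (fun l => b (l+1)) (b (k+1))))
      =O[nhdsWithin 0 (Set.Ioi 0)] (fun r : ℝ => r ^ (2 * k + 3) * Real.log r)) ↔
    ∀ j ≤ k+1, auxC k μ lam b j = 0 := by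
  obtain ⟨A, B, A', B', h⟩ := aux_expand k hk μ lam b hb
  have hR := aux_rem A B A' B' (2*k+3)
  constructor
  · intro hO
    apply aux_coeff
    refine (hO.sub hR).congr' ?_ (by rfl)
    filter_upwards [self_mem_nhdsWithin] with r hr
    rw [h r hr]; ring
  · intro hC
    refine hR.congr' ?_ (by rfl)
    filter_upwards [self_mem_nhdsWithin] with r hr
    rw [h r hr, Finset.sum_eq_zero, zero_add]
    intro j hj
    rw [hC j (by have := Finset.mem_range.1 hj; omega), zero_mul]

/-- There exist unique real numbers `a₁, …, a_k` and `c` such that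
`h(r) = 1 + Σ_{l=1}^{k} a_l r^{2l} + c r^{2k+2} log r` satisfies
`(ℒh)(r) = O(r^{2k+3} log r)` as `r → 0⁺`. -/
theorem exists_unique_asymptotic_solution (k : ℕ) (hk : 1 ≤ k) (μ lam : ℝ) :
    ∃! p : (Fin k → ℝ) × ℝ,
      (scalarJacobiOp k μ lam (ansatz k p.1 p.2)) =O[nhdsWithin 0 (Set.Ioi 0)]
        (fun r : ℝ => r ^ (2 * k + 3) * Real.log r) := by
  refine ⟨(fun l => auxg k μ lam (l+1), auxg k μ lam (k+1)), ?_, ?_⟩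
  · exact (aux_iff k hk μ lam (auxg k μ lam) (by simp [auxg])).2 fun j _ => aux_C_g k μ lam j
  · rintro ⟨a, c⟩ h
    let b : ℕ → ℝ := fun j => match j with
      | 0 => 1
      | (j+1) => if h : j < k then a ⟨j, h⟩ else c
    have ha : a = fun l : Fin k => b (l+1) := by
      funext l; simp [b]
    have hc : c = b (k+1) := by simp [b]
    have h' : (scalarJacobiOp k μ lam (ansatz k (fun l => b (l+1)) (b (k+1))))
      =O[nhdsWithin 0 (Set.Ioi 0)] (fun r : ℝ => r ^ (2 * k + 3) * Real.log r) := by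
      rw [← ha, ← hc]; exact h
    have hu := aux_unique k μ lam b rfl (k+1) ((aux_iff k hk μ lam b rfl).1 h')
    ext l
    · simp only [ha]; exact hu (l+1) (by omega)
    · simp only [hc]; exact hu _ le_rfl
end

section
/- Let k ≥ 1 be an integer and μ, λ real numbers, and let ℒ be the operator (ℒh)(r) = μ r² h(r) − (1 − λr²/2)² (r d/dr)² h(r) + 2(k+1)(1 − λ²r⁴/4)(r d/dr) h(r). If real numbers a₁, …, a_k and c are such that h(r) = 1 + Σ_{l=1}^{k} a_l r^{2l} + c r^{2k+2} log r satisfies (ℒh)(r) = O(r^{2k+3} log r) as r → 0⁺, then c = −2 c_{k+1} · Π_{l=1}^{k+1} [μ + 2λ(k+l)(k−l+1)], where c_{k+1} = (−1)^{k+1} / (2^{2k+2} k! (k+1)!). -/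
open Real Filter Asymptotics

open Polynomial in
/-- `y d/dy` on polynomials -/
noncomputable def pD (p : Polynomial ℝ) : Polynomial ℝ := Polynomial.X * Polynomial.derivative p

noncomputable def sD (p : PowerSeries ℝ) : PowerSeries ℝ := PowerSeries.X * PowerSeries.derivative ℝ p

theorem sD_coeff (p : PowerSeries ℝ) (n : ℕ) :
    PowerSeries.coeff n (sD p) = n * PowerSeries.coeff n p := by
  unfold sD
  cases n with
  | zero => simp
  | succ n => 
    rw [PowerSeries.coeff_succ_X_mul, PowerSeries.coeff_derivative]
    push_cast; ring

theorem sD_add (p q : PowerSeries ℝ) : sD (p + q) = sD p + sD q := by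
  unfold sD; rw [map_add]; ring

theorem sD_mul (p q : PowerSeries ℝ) : sD (p * q) = p * sD q + q * sD p := by
  unfold sD; rw [Derivation.leibniz]; simp only [smul_eq_mul]; ring

theorem sD_C (a : ℝ) : sD (PowerSeries.C a) = 0 := by
  ext n; rw [sD_coeff]; cases n <;> simp [PowerSeries.coeff_C]

theorem sD_X : sD (PowerSeries.X : PowerSeries ℝ) = PowerSeries.X := by
  ext n; rw [sD_coeff, PowerSeries.coeff_X]; split_ifs with h <;> simp [h]

theorem sD_pow (p s : PowerSeries ℝ) (h : sD p = s * p) (j : ℕ) :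
    sD (p ^ j) = PowerSeries.C (j : ℝ) * s * p ^ j := by
  induction j with
  | zero => 
    have := sD_C 1
    simpa using this
  | succ j ih => 
    rw [pow_succ, sD_mul, ih, h]; push_cast; rw [map_add, map_one]; ring

noncomputable def sL (k : ℕ) (μ lam : ℝ) (p : PowerSeries ℝ) : PowerSeries ℝ :=
  PowerSeries.C μ * PowerSeries.X * p
    - PowerSeries.C 4 * (1 - PowerSeries.C (lam / 2) * PowerSeries.X) ^ 2 * sD (sD p)
    + PowerSeries.C (4 * ((k : ℝ) + 1)) * (1 - (PowerSeries.C (lam / 2) * PowerSeries.X) ^ 2) * sD p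

theorem C_two : (PowerSeries.C (2 : ℝ) : PowerSeries ℝ) = 2 := map_ofNat _ 2

theorem C_half (lam : ℝ) : (PowerSeries.C lam : PowerSeries ℝ) = 2 * PowerSeries.C (lam / 2) := by
  rw [← C_two, ← map_mul]; congr 1; ring

theorem sL_add (k : ℕ) (μ lam : ℝ) (p q : PowerSeries ℝ) :
    sL k μ lam (p + q) = sL k μ lam p + sL k μ lam q := by
  unfold sL; simp only [sD_add]; ring

theorem sL_C_mul (k : ℕ) (μ lam : ℝ) (a : ℝ) (q : PowerSeries ℝ) :
    sL k μ lam (PowerSeries.C a * q) = PowerSeries.C a * sL k μ lam q := by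
  unfold sL; simp only [sD_mul, sD_C, mul_zero, add_zero]; ring

theorem sL_coeff (k : ℕ) (μ lam : ℝ) (p : PowerSeries ℝ) (n : ℕ)
    (h : ∀ i < n, PowerSeries.coeff i p = 0) :
    PowerSeries.coeff n (sL k μ lam p) = 4 * n * (k + 1 - n) * PowerSeries.coeff n p := by
  have key : sL k μ lam p = PowerSeries.C (-4) * sD (sD p) + PowerSeries.C (4 * ((k : ℝ) + 1)) * sD p
      + PowerSeries.X * (PowerSeries.C μ * p + PowerSeries.C (4 * lam) * sD (sD p) 
        + PowerSeries.X * (PowerSeries.C (-lam ^ 2) * sD (sD p) 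
          + PowerSeries.C (-lam ^ 2 * (k + 1)) * sD p)) := by
    unfold sL
    have h2 : PowerSeries.C lam = 2 * PowerSeries.C (lam / 2) := by
      exact C_half lam
    simp only [map_mul, map_neg, map_pow, map_add, map_one, h2]
    try simp only [map_ofNat]
    try rw [show (PowerSeries.C (4 : ℝ) : PowerSeries ℝ) = 4 from map_ofNat _ 4]
    ring
  rw [key, map_add, map_add, PowerSeries.coeff_C_mul, PowerSeries.coeff_C_mul, sD_coeff, sD_coeff]
  have : PowerSeries.coeff n (PowerSeries.X * (PowerSeries.C μ * p + PowerSeries.C (4 * lam) * sD (sD p) 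
        + PowerSeries.X * (PowerSeries.C (-lam ^ 2) * sD (sD p) 
          + PowerSeries.C (-lam ^ 2 * (k + 1)) * sD p))) = 0 := by
    rcases n with _ | _ | n
    · simp
    · rw [PowerSeries.coeff_succ_X_mul, map_add, map_add, PowerSeries.coeff_C_mul, PowerSeries.coeff_C_mul,
        sD_coeff, sD_coeff, h 0 (by omega)]
      simp
    · rw [PowerSeries.coeff_succ_X_mul, map_add, map_add, PowerSeries.coeff_succ_X_mul, map_add,
        PowerSeries.coeff_C_mul, PowerSeries.coeff_C_mul, PowerSeries.coeff_C_mul, PowerSeries.coeff_C_mul]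
      simp only [sD_coeff]
      rw [h n (by omega), h (n+1) (by omega)]
      simp
  rw [this]; ring

theorem sL_unique (k : ℕ) (μ lam : ℝ) (p : PowerSeries ℝ) 
    (h0 : PowerSeries.coeff 0 p = 0)
    (h : ∀ i ≤ k, PowerSeries.coeff i (sL k μ lam p) = 0) :
    PowerSeries.coeff (k + 1) (sL k μ lam p) = 0 := by
  have : ∀ n ≤ k, PowerSeries.coeff n p = 0 := by
    intro n
    induction n using Nat.strong_induction_on with
    | _ n ih =>
      intro hn
      rcases Nat.eq_zero_or_pos n with rfl | hp
      · exact h0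
      have h1 := sL_coeff k μ lam p n (fun i hi => ih i hi (by omega))
      rw [h n hn] at h1
      have h2 : (n : ℝ) > 0 := by exact_mod_cast hp
      have h3 : (n : ℝ) ≤ k := by exact_mod_cast hn
      have : 4 * (n : ℝ) * (k + 1 - n) ≠ 0 := by
        apply ne_of_gt; apply mul_pos <;> linarith
      exact (mul_eq_zero.mp h1.symm).resolve_left this
  rw [sL_coeff k μ lam p (k+1) (fun i hi => this i (by omega))]
  push_cast; ring

noncomputable def ff (k : ℕ) (μ lam : ℝ) (j : ℕ) : ℝ := μ + 4 * lam * j * (2 * k + 1 - 2 * j)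

noncomputable def uu (lam : ℝ) : PowerSeries ℝ := (1 - PowerSeries.C (lam / 2) * PowerSeries.X)⁻¹

theorem uu_mul (lam : ℝ) : (1 - PowerSeries.C (lam / 2) * PowerSeries.X) * uu lam = 1 := by
  unfold uu
  apply PowerSeries.mul_inv_cancel
  simp

theorem sL_Z (k : ℕ) (μ lam : ℝ) (j : ℕ) :
    sL k μ lam ((PowerSeries.X * uu lam ^ 2) ^ j) = 
     (1 - PowerSeries.C (lam / 2) * PowerSeries.X) ^ 2 *
      (PowerSeries.C (4 * (j : ℝ) * ((k : ℝ) + 1 - (j : ℝ))) * (PowerSeries.X * uu lam ^ 2) ^ j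
        + PowerSeries.C (ff k μ lam j) * (PowerSeries.X * uu lam ^ 2) ^ (j + 1)) := by
  have hu := uu_mul lam
  have h2 : PowerSeries.C lam = 2 * PowerSeries.C (lam / 2) := by
    exact C_half lam
  generalize uu lam = u at *
  set y : PowerSeries ℝ := PowerSeries.X with hy
  set t : PowerSeries ℝ := PowerSeries.C (lam / 2) with ht
  have hone : sD (1 : PowerSeries ℝ) = 0 := by simpa using sD_C 1
  have hx : sD (t * y) = t * y := by rw [sD_mul, sD_C, sD_X]; ring
  have hneg : sD (1 - t * y) = - (t * y) := by
    have : sD (1 - t * y) + sD (t * y) = 0 := by rw [← sD_add]; simpa using hone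
    rw [hx] at this; linear_combination this
  have hDu : sD u = t * y * u ^ 2 := by
    have h1 : sD ((1 - t * y) * u) = 0 := by rw [hu, hone]
    rw [sD_mul, hneg] at h1
    linear_combination u * h1 - sD u * hu 
  have hDZ : sD (y * u ^ 2) = (1 + 2 * (t * y * u)) * (y * u ^ 2) := by
    rw [sq, sD_mul, sD_mul, hDu, sD_X]; ring
  have hDs : sD (1 + 2 * (t * y * u)) = 2 * t * y * u ^ 2 := by
    have h20 : sD (2 : PowerSeries ℝ) = 0 := by rw [← C_two]; exact sD_C 2
    rw [sD_add, sD_mul, h20, sD_mul, hx, hDu, hone]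
    linear_combination - 2 * t * y * u * hu
  have hDj := sD_pow _ _ hDZ j
  have hDDj : sD (sD ((y * u ^ 2) ^ j)) = PowerSeries.C (j : ℝ) * (2 * t * y * u ^ 2) * (y * u ^ 2) ^ j
      + PowerSeries.C (j : ℝ) ^ 2 * (1 + 2 * (t * y * u)) ^ 2 * (y * u ^ 2) ^ j := by
    rw [hDj, sD_mul, sD_mul, sD_C, hDj, hDs]; ring
  unfold sL ff
  rw [hDDj, hDj, ← hy, ← ht]
  simp only [map_mul, map_add, map_sub, map_one, map_ofNat, h2, pow_succ (y * u ^ 2) j]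
  generalize (y * u ^ 2) ^ j = Z
  generalize PowerSeries.C (j : ℝ) = J
  generalize PowerSeries.C (k : ℝ) = K
  generalize PowerSeries.C μ = M
  have e1 : (1 - t * y) * (1 + 2 * (t * y * u)) = 1 + t * y := by
    linear_combination 2 * t * y * hu
  have e2 : (1 - t * y) ^ 2 * u ^ 2 = 1 := by
    rw [← mul_pow, hu, one_pow]
  generalize hs : (1 + 2 * (t * y * u)) = s at *
  linear_combination (-8 * J * t * y * Z - (M + 4 * (2 * t) * J * (2 * K + 1 - 2 * J)) * y * Z) * e2
    + (-4 * J ^ 2 * Z * ((1 - t * y) * s + (1 + t * y)) + 4 * (K + 1) * (1 + t * y) * J * Z) * e1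

noncomputable def bb (k : ℕ) (μ lam : ℝ) (m : ℕ) : ℝ :=
  ∏ j ∈ Finset.range m, (- ff k μ lam j / (4 * (j + 1) * (k - j)))

noncomputable def QQ (k : ℕ) (μ lam : ℝ) (m : ℕ) : PowerSeries ℝ :=
  ∑ j ∈ Finset.range (m + 1), PowerSeries.C (bb k μ lam j) * (PowerSeries.X * uu lam ^ 2) ^ j

theorem sL_QQ (k : ℕ) (μ lam : ℝ) (m : ℕ) (hm : m ≤ k) :
    sL k μ lam (QQ k μ lam m) = (1 - PowerSeries.C (lam / 2) * PowerSeries.X) ^ 2 *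
      (PowerSeries.C (ff k μ lam m * bb k μ lam m) * (PowerSeries.X * uu lam ^ 2) ^ (m + 1)) := by
  induction m with
  | zero => 
    unfold QQ
    rw [Finset.sum_range_one, sL_C_mul, sL_Z]
    simp [bb]
  | succ m ih =>
    have : QQ k μ lam (m + 1) = QQ k μ lam m + PowerSeries.C (bb k μ lam (m+1)) * (PowerSeries.X * uu lam ^ 2) ^ (m+1) := by
      unfold QQ; rw [Finset.sum_range_succ]
    rw [this, sL_add, ih (by omega), sL_C_mul, sL_Z]
    have hb : bb k μ lam (m+1) * (4 * ((m + 1 : ℕ) : ℝ) * (k + 1 - ((m + 1 : ℕ) : ℝ))) = - (ff k μ lam m * bb k μ lam m) := by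
      unfold bb; rw [Finset.prod_range_succ]
      have h3 : (m : ℝ) + 1 ≤ k := by exact_mod_cast hm
      have : (k : ℝ) - m ≠ 0 := by apply ne_of_gt; linarith
      have : (m : ℝ) + 1 ≠ 0 := by positivity
      push_cast
      field_simp
      ring
    have hb' := congrArg PowerSeries.C hb
    rw [map_mul, map_neg] at hb'
    rw [mul_comm (ff k μ lam (m+1)), map_mul (PowerSeries.C) (bb k μ lam (m+1)) (ff k μ lam (m+1))]
    linear_combination (1 - PowerSeries.C (lam / 2) * PowerSeries.X) ^ 2 * (PowerSeries.X * uu lam ^ 2) ^ (m+1) * hb'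

theorem sL_QQ_coeff (k : ℕ) (μ lam : ℝ) (n : ℕ) (hn : n ≤ k + 1) :
    PowerSeries.coeff n (sL k μ lam (QQ k μ lam k)) 
      = if n = k + 1 then ff k μ lam k * bb k μ lam k else 0 := by
  rw [sL_QQ k μ lam k le_rfl]
  have : (1 - PowerSeries.C (lam / 2) * PowerSeries.X) ^ 2 *
      (PowerSeries.C (ff k μ lam k * bb k μ lam k) * (PowerSeries.X * uu lam ^ 2) ^ (k + 1)) =
      PowerSeries.X ^ (k + 1) * ((1 - PowerSeries.C (lam / 2) * PowerSeries.X) ^ 2 *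
      PowerSeries.C (ff k μ lam k * bb k μ lam k) * (uu lam ^ 2) ^ (k + 1)) := by
    rw [mul_pow]; ring
  rw [this, PowerSeries.coeff_X_pow_mul']
  split_ifs with h1 h2 h2
  · subst h2
    simp [uu]
  · omega
  · omega
  · rfl

theorem QQ_zero (k : ℕ) (μ lam : ℝ) (m : ℕ) : PowerSeries.coeff 0 (QQ k μ lam m) = 1 := by
  unfold QQ
  rw [map_sum, Finset.sum_range_succ']
  simp [bb]

theorem main_alg (k : ℕ) (μ lam : ℝ) (P : PowerSeries ℝ) (c : ℝ)
    (h0 : PowerSeries.coeff 0 P = 1)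
    (h : ∀ n ≤ k + 1, PowerSeries.coeff n (sL k μ lam P) = if n = k + 1 then c else 0) :
    c = ff k μ lam k * bb k μ lam k := by
  have hs : P = (P + PowerSeries.C (-1) * QQ k μ lam k) + QQ k μ lam k := by simp
  have hc : ∀ n, PowerSeries.coeff n (sL k μ lam (P + PowerSeries.C (-1) * QQ k μ lam k)) =
      PowerSeries.coeff n (sL k μ lam P) - PowerSeries.coeff n (sL k μ lam (QQ k μ lam k)) := by
    intro n
    rw [sL_add, sL_C_mul, map_add, PowerSeries.coeff_C_mul]; ring
  have := sL_unique k μ lam (P + PowerSeries.C (-1) * QQ k μ lam k)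
    (by rw [map_add, PowerSeries.coeff_C_mul, h0, QQ_zero]; ring)
    (by 
      intro i hi
      rw [hc, h i (by omega), sL_QQ_coeff _ _ _ _ (by omega), if_neg (by omega), if_neg (by omega), sub_zero])
  rw [hc, h _ le_rfl, sL_QQ_coeff _ _ _ _ le_rfl, if_pos rfl, if_pos rfl] at this
  linarith

theorem prod_reindex (k : ℕ) (μ lam : ℝ) :
    ∏ l ∈ Finset.Icc 1 (k + 1),
            (μ + 2 * lam * ((k : ℝ) + (l : ℝ)) * ((k : ℝ) - (l : ℝ) + 1))
     = ∏ j ∈ Finset.range (k + 1), ff k μ lam j := by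
  symm
  apply Finset.prod_bij (fun j _ => if 2 * j ≤ k then k + 1 - 2 * j else 2 * j - k)
  · intro j hj
    rw [Finset.mem_range] at hj
    rw [Finset.mem_Icc]
    split_ifs <;> omega
  · intro i hi j hj hij
    rw [Finset.mem_range] at hi hj
    split_ifs at hij <;> omega
  · intro l hl
    rw [Finset.mem_Icc] at hl
    rcases Nat.even_or_odd' (k + 1 - l) with ⟨j, hj | hj⟩
    · refine ⟨j, Finset.mem_range.mpr (by omega), ?_⟩
      rw [if_pos (by omega)]; omega
    · refine ⟨k - j, Finset.mem_range.mpr (by omega), ?_⟩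
      rw [if_neg (by omega)]; omega
  · intro j hj
    rw [Finset.mem_range] at hj
    unfold ff
    split_ifs with h
    · rw [Nat.cast_sub (by omega)]; push_cast; ring
    · rw [Nat.cast_sub (by omega)]; push_cast; ring

theorem bb_val (k : ℕ) (μ lam : ℝ) : 
    bb k μ lam k = (-1) ^ k * (∏ j ∈ Finset.range k, ff k μ lam j) / (4 ^ k * (k.factorial : ℝ) * k.factorial) := by
  unfold bb
  have h1 : ∏ j ∈ Finset.range k, ((j : ℝ) + 1) = k.factorial := by
    rw [← Finset.prod_range_add_one_eq_factorial]; push_cast; rfl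
  have h2 : ∏ j ∈ Finset.range k, ((k : ℝ) - j) = k.factorial := by
    rw [← h1, ← Finset.prod_range_reflect]
    apply Finset.prod_congr rfl
    intro j hj
    rw [Finset.mem_range] at hj
    rw [Nat.sub_sub, Nat.cast_sub (by omega)]; push_cast; ring
  rw [Finset.prod_div_distrib, Finset.prod_mul_distrib, Finset.prod_mul_distrib, h1, h2, Finset.prod_neg]
  simp

theorem coeff_vanish (G : Polynomial ℝ) (N : ℕ)
    (h : (fun r : ℝ => G.eval (r ^ 2)) =o[nhdsWithin 0 (Set.Ioi 0)] (fun r : ℝ => r ^ (2 * N))) :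
    ∀ n ≤ N, G.coeff n = 0 := by
  intro n
  induction n using Nat.strong_induction_on with
  | _ n ih =>
    intro hn
    obtain ⟨H, hH⟩ := Polynomial.X_pow_dvd_iff.mpr (fun d hd => ih d hd (by omega) : ∀ d < n, G.coeff d = 0)
    have hc : G.coeff n = H.eval 0 := by
      rw [hH, Polynomial.coeff_X_pow_mul', if_pos le_rfl, Nat.sub_self, Polynomial.coeff_zero_eq_eval_zero]
    have t1 : Tendsto (fun r : ℝ => H.eval (r ^ 2)) (nhdsWithin 0 (Set.Ioi 0)) (nhds (H.eval 0)) := by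
      have : Continuous (fun r : ℝ => H.eval (r ^ 2)) := by fun_prop
      have := this.tendsto 0
      simp only [ne_eq, OfNat.ofNat_ne_zero, not_false_eq_true, zero_pow] at this
      exact this.mono_left nhdsWithin_le_nhds
    have h' : (fun r : ℝ => G.eval (r ^ 2)) =o[nhdsWithin 0 (Set.Ioi 0)] (fun r : ℝ => r ^ (2 * n)) := by
      refine h.trans_isBigO ?_
      refine IsBigO.of_bound 1 ?_
      have : ∀ᶠ r : ℝ in nhdsWithin 0 (Set.Ioi 0), r ∈ Set.Ioo (0 : ℝ) 1 := Ioo_mem_nhdsGT one_pos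
      filter_upwards [this] with r hr
      rw [one_mul, Real.norm_of_nonneg (by have := hr.1; positivity), Real.norm_of_nonneg (by have := hr.1; positivity)]
      exact pow_le_pow_of_le_one hr.1.le hr.2.le (by omega)
    have t2 := h'.tendsto_div_nhds_zero
    have t3 : Tendsto (fun r : ℝ => H.eval (r ^ 2)) (nhdsWithin 0 (Set.Ioi 0)) (nhds 0) := by
      refine t2.congr' ?_
      filter_upwards [self_mem_nhdsWithin] with r hr
      have hr : (0 : ℝ) < r := hr
      rw [hH, Polynomial.eval_mul, Polynomial.eval_pow, Polynomial.eval_X, ← pow_mul]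
      field_simp
    rw [hc]
    exact tendsto_nhds_unique t1 t3

theorem rDeriv_form (f : ℝ → ℝ) (p q : Polynomial ℝ)
    (hf : ∀ r > 0, f r = p.eval (r ^ 2) + q.eval (r ^ 2) * Real.log r) :
    ∀ r > 0, rDeriv f r = (Polynomial.C 2 * pD p + q).eval (r ^ 2)
      + (Polynomial.C 2 * pD q).eval (r ^ 2) * Real.log r := by
  intro r hr
  have he : f =ᶠ[nhds r] (fun r => p.eval (r ^ 2) + q.eval (r ^ 2) * Real.log r) := by
    filter_upwards [Ioi_mem_nhds hr] with x hx using hf x hx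
  have hsq : HasDerivAt (fun r : ℝ => r ^ 2) (2 * r) r := by simpa using hasDerivAt_pow 2 r
  have d1 : ∀ p : Polynomial ℝ, HasDerivAt (fun r : ℝ => p.eval (r ^ 2)) (p.derivative.eval (r ^ 2) * (2 * r)) r :=
    fun p => HasDerivAt.comp (h₂ := fun x => p.eval x) r (p.hasDerivAt (r ^ 2)) hsq
  have d := (d1 p).add ((d1 q).mul (Real.hasDerivAt_log hr.ne'))
  unfold rDeriv
  rw [he.deriv_eq]
  have d' : deriv (fun r => p.eval (r ^ 2) + q.eval (r ^ 2) * Real.log r) r = _ := d.deriv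
  rw [d']
  simp only [pD, Polynomial.eval_add, Polynomial.eval_mul, Polynomial.eval_C, Polynomial.eval_X]
  field_simp
  ring

noncomputable def pL (k : ℕ) (μ lam : ℝ) (p : Polynomial ℝ) : Polynomial ℝ :=
  Polynomial.C μ * Polynomial.X * p
    - Polynomial.C 4 * (1 - Polynomial.C (lam / 2) * Polynomial.X) ^ 2 * pD (pD p)
    + Polynomial.C (4 * ((k : ℝ) + 1)) * (1 - (Polynomial.C (lam / 2) * Polynomial.X) ^ 2) * pD p

theorem pD_coe (p : Polynomial ℝ) : ((pD p : Polynomial ℝ) : PowerSeries ℝ) = sD p := by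
  unfold pD sD
  rw [Polynomial.coe_mul, Polynomial.coe_X]
  congr 1
  exact (PowerSeries.derivative_coe p).symm

theorem pL_coe (k : ℕ) (μ lam : ℝ) (p : Polynomial ℝ) :
    ((pL k μ lam p : Polynomial ℝ) : PowerSeries ℝ) = sL k μ lam p := by
  unfold pL sL
  simp only [Polynomial.coe_add, Polynomial.coe_sub, Polynomial.coe_mul, Polynomial.coe_pow, 
    Polynomial.coe_one, Polynomial.coe_C, Polynomial.coe_X, pD_coe]

theorem pD_add (p q : Polynomial ℝ) : pD (p + q) = pD p + pD q := by
  unfold pD; rw [Polynomial.derivative_add]; ring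

theorem pD_C_mul (a : ℝ) (q : Polynomial ℝ) : pD (Polynomial.C a * q) = Polynomial.C a * pD q := by
  unfold pD; rw [Polynomial.derivative_C_mul]; ring

theorem pD_X_pow (n : ℕ) : pD (Polynomial.X ^ (n + 1)) = Polynomial.C ((n : ℝ) + 1) * Polynomial.X ^ (n + 1) := by
  unfold pD; rw [Polynomial.derivative_X_pow]; simp; ring

noncomputable def WW (k : ℕ) (μ lam c : ℝ) : Polynomial ℝ :=
  Polynomial.C c * (Polynomial.C μ + Polynomial.C (4 * ((k : ℝ) + 1) ^ 2)
    * (Polynomial.C lam  - Polynomial.C (lam ^ 2 / 2) * Polynomial.X))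

noncomputable def VV (k : ℕ) (lam c : ℝ) : Polynomial ℝ :=
  Polynomial.C (c * (k + 1)) * (Polynomial.C (4 * lam) - Polynomial.C (3 / 2 * lam ^ 2) * Polynomial.X)

noncomputable def AA (k : ℕ) (μ lam c : ℝ) (p : Polynomial ℝ) : Polynomial ℝ :=
  pL k μ lam p - Polynomial.C (2 * (k + 1) * c) * Polynomial.X ^ (k + 1)
    + Polynomial.X ^ (k + 2) * VV k lam c

theorem op_form (k : ℕ) (μ lam c : ℝ) (f : ℝ → ℝ) (p : Polynomial ℝ)
    (hf : ∀ r > 0, f r = p.eval (r ^ 2) + (Polynomial.C c * Polynomial.X ^ (k + 1)).eval (r ^ 2) * Real.log r) :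
    ∀ r > 0, scalarJacobiOp k μ lam f r = (AA k μ lam c p).eval (r ^ 2)
      + (Polynomial.X ^ (k + 2) * WW k μ lam c).eval (r ^ 2) * Real.log r := by
  intro r hr
  have h1 := rDeriv_form f _ _ hf
  have h2 := rDeriv_form _ _ _ h1
  unfold scalarJacobiOp
  rw [hf r hr, h1 r hr, h2 r hr]
  simp only [AA, WW, VV, pL, pD_add, pD_C_mul, pD_X_pow, Polynomial.eval_add, Polynomial.eval_sub, 
    Polynomial.eval_mul, Polynomial.eval_C, Polynomial.eval_X, Polynomial.eval_pow, Polynomial.eval_one]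
  generalize (pD (pD p)).eval (r ^ 2) = P2
  generalize (pD p).eval (r ^ 2) = P1
  generalize Polynomial.eval (r ^ 2) p = P0
  ring

theorem log_small (k : ℕ) : (fun r : ℝ => r ^ (2 * k + 3) * Real.log r) =o[nhdsWithin 0 (Set.Ioi 0)]
    (fun r : ℝ => r ^ (2 * (k + 1))) := by
  have hl : (fun r : ℝ => r * Real.log r) =o[nhdsWithin 0 (Set.Ioi 0)] (fun _ : ℝ => (1 : ℝ)) := by
    rw [isLittleO_one_iff]
    have := Real.continuous_mul_log.tendsto 0
    simp only [zero_mul] at this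
    exact this.mono_left nhdsWithin_le_nhds
  have := (isBigO_refl (fun r : ℝ => r ^ (2 * (k + 1))) (nhdsWithin 0 (Set.Ioi 0))).mul_isLittleO hl
  refine this.congr ?_ ?_
  · intro r; ring
  · intro r; ring

theorem AA_small (k : ℕ) (μ lam c : ℝ) (f : ℝ → ℝ) (p : Polynomial ℝ)
    (hf : ∀ r > 0, f r = p.eval (r ^ 2) + (Polynomial.C c * Polynomial.X ^ (k + 1)).eval (r ^ 2) * Real.log r)
    (h : (scalarJacobiOp k μ lam f) =O[nhdsWithin 0 (Set.Ioi 0)]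
      (fun r : ℝ => r ^ (2 * k + 3) * Real.log r)) :
    (fun r : ℝ => (AA k μ lam c p).eval (r ^ 2)) =o[nhdsWithin 0 (Set.Ioi 0)] (fun r : ℝ => r ^ (2 * (k + 1))) := by
  have hB : (fun r : ℝ => (Polynomial.X ^ (k + 2) * WW k μ lam c).eval (r ^ 2) * Real.log r)
      =O[nhdsWithin 0 (Set.Ioi 0)] (fun r : ℝ => r ^ (2 * k + 3) * Real.log r) := by
    have hc : Continuous (fun r : ℝ => r * (WW k μ lam c).eval (r ^ 2)) := by fun_prop
    have h1 : (fun r : ℝ => r * (WW k μ lam c).eval (r ^ 2)) =O[nhdsWithin 0 (Set.Ioi 0)] (fun _ : ℝ => (1 : ℝ)) :=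
      ((hc.tendsto 0).mono_left nhdsWithin_le_nhds).isBigO_one ℝ
    have := h1.mul (isBigO_refl (fun r : ℝ => r ^ (2 * k + 3) * Real.log r) (nhdsWithin 0 (Set.Ioi 0)))
    refine this.congr ?_ ?_
    · intro r
      simp only [Polynomial.eval_mul, Polynomial.eval_pow, Polynomial.eval_X]
      ring
    · intro r; ring
  refine ((h.sub hB).trans_isLittleO (log_small k)).congr' ?_ EventuallyEq.rfl
  filter_upwards [self_mem_nhdsWithin] with r hr
  rw [op_form k μ lam c f p hf r hr]; ring

theorem c_eq (k : ℕ) (μ lam c : ℝ) (f : ℝ → ℝ) (p : Polynomial ℝ) (hp : p.coeff 0 = 1)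
    (hf : ∀ r > 0, f r = p.eval (r ^ 2) + (Polynomial.C c * Polynomial.X ^ (k + 1)).eval (r ^ 2) * Real.log r)
    (h : (scalarJacobiOp k μ lam f) =O[nhdsWithin 0 (Set.Ioi 0)]
      (fun r : ℝ => r ^ (2 * k + 3) * Real.log r)) :
    2 * (k + 1) * c = ff k μ lam k * bb k μ lam k := by
  have hA := coeff_vanish _ _ (AA_small k μ lam c f p hf h)
  apply main_alg k μ lam (p : PowerSeries ℝ)
  · rw [Polynomial.coeff_coe, hp]
  · intro n hn
    have := hA n hn
    rw [← pL_coe, Polynomial.coeff_coe]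
    rw [AA, Polynomial.coeff_add, Polynomial.coeff_sub, Polynomial.coeff_C_mul, Polynomial.coeff_X_pow,
      Polynomial.coeff_X_pow_mul', if_neg (show ¬ k + 2 ≤ n by omega)] at this
    split_ifs at this ⊢ <;> linarith

/-- If `h(r) = 1 + Σ_{l=1}^{k} a_l r^{2l} + c r^{2k+2} log r` satisfies
`(ℒh)(r) = O(r^{2k+3} log r)` as `r → 0⁺`, then
`c = −2 c_{k+1} Π_{l=1}^{k+1} [μ + 2λ(k+l)(k−l+1)]` with
`c_{k+1} = (−1)^{k+1} / (2^{2k+2} k! (k+1)!)`. -/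
theorem log_coefficient_formula (k : ℕ) (hk : 1 ≤ k) (μ lam : ℝ)
    (a : Fin k → ℝ) (c : ℝ)
    (h : (scalarJacobiOp k μ lam (ansatz k a c)) =O[nhdsWithin 0 (Set.Ioi 0)]
      (fun r : ℝ => r ^ (2 * k + 3) * Real.log r)) :
    c = -2 * ((-1) ^ (k + 1) / (2 ^ (2 * k + 2) * (Nat.factorial k : ℝ)
          * (Nat.factorial (k + 1) : ℝ)))
        * ∏ l ∈ Finset.Icc 1 (k + 1),
            (μ + 2 * lam * ((k : ℝ) + (l : ℝ)) * ((k : ℝ) - (l : ℝ) + 1)) := by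
  have key := c_eq k μ lam c (ansatz k a c)
    (1 + ∑ l : Fin k, Polynomial.C (a l) * Polynomial.X ^ ((l : ℕ) + 1))
    (by simp [Polynomial.coeff_X_pow])
    (by
      intro r hr
      simp only [ansatz, Polynomial.eval_add, Polynomial.eval_one, Polynomial.eval_finsetSum,
        Polynomial.eval_mul, Polynomial.eval_C, Polynomial.eval_pow, Polynomial.eval_X, ← pow_mul]
      congr 1)
    h
  rw [prod_reindex, Finset.prod_range_succ]
  rw [bb_val] at key
  have hk1 : (k : ℝ) + 1 ≠ 0 := by positivity
  have hfac : (k.factorial : ℝ) ≠ 0 := by positivity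
  have hc : c = ff k μ lam k * ((-1) ^ k * (∏ j ∈ Finset.range k, ff k μ lam j)
      / (4 ^ k * (k.factorial : ℝ) * k.factorial)) / (2 * (k + 1)) := by
    rw [← key]; field_simp
  rw [hc, Nat.factorial_succ, show (2 : ℝ) ^ (2 * k + 2) = 4 * 4 ^ k by
    rw [pow_add, pow_mul]; norm_num; ring]
  push_cast
  rw [pow_succ]
  field_simp
  ring
end

section
/- Let k ≥ 1 be an integer, and for real numbers μ, λ let c(μ, λ) denote the unique real number such that for some reals a₁, …, a_k the function h(r) = 1 + Σ_{l=1}^{k} a_l r^{2l} + c(μ,λ) r^{2k+2} log r satisfies μ r² h(r) − (1 − λr²/2)²(r d/dr)² h(r) + 2(k+1)(1 − λ²r⁴/4)(r d/dr) h(r) = O(r^{2k+3} log r) as r → 0⁺. Then for every real t ≠ 0 and all μ, λ one has c(tμ, tλ) = t^{k+1} c(μ, λ). -/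
open Real Filter Asymptotics

open Polynomial in
/-- `P(r²) + Q(r²) log r` -/
noncomputable def FF (P Q : ℝ[X]) : ℝ → ℝ := fun r => P.eval (r ^ 2) + Q.eval (r ^ 2) * Real.log r

open Polynomial in
/-- `r d/dr` in the variable `r²` -/
noncomputable def th (P : ℝ[X]) : ℝ[X] := C 2 * (X * derivative P)

open Polynomial in
lemma th_coeff (P : ℝ[X]) (n : ℕ) : (th P).coeff n = 2 * n * P.coeff n := by
  unfold th
  rw [coeff_C_mul]
  cases n with
  | zero => simp
  | succ n => rw [coeff_X_mul, coeff_derivative]; push_cast; ring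

open Polynomial in
lemma rDeriv_FF (P Q : ℝ[X]) (f : ℝ → ℝ) (hf : ∀ r, 0 < r → f r = FF P Q r) (r : ℝ) (hr : 0 < r) :
    rDeriv f r = FF (th P + Q) (th Q) r := by
  have he : f =ᶠ[nhds r] FF P Q := by
    filter_upwards [lt_mem_nhds hr] with x hx using hf x hx
  have h2 : HasDerivAt (fun x : ℝ => x ^ 2) (2 * r) r := by
    simpa using hasDerivAt_pow 2 r
  have hP := (P.hasDerivAt (r ^ 2)).comp r h2
  have hQ := (Q.hasDerivAt (r ^ 2)).comp r h2
  have hd := hP.add (hQ.mul (Real.hasDerivAt_log hr.ne'))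
  have hd' : HasDerivAt (FF P Q) _ r := hd
  unfold rDeriv
  rw [he.deriv_eq, hd'.deriv]
  simp only [FF, th, Function.comp, eval_add, eval_mul, eval_C, eval_X]
  field_simp
  ring

open Polynomial in
lemma coeff_zero_of_isBigO (k : ℕ) (U : ℝ[X])
    (h : (fun r : ℝ => U.eval (r ^ 2)) =O[nhdsWithin 0 (Set.Ioi 0)]
      (fun r : ℝ => r ^ (2 * k + 3) * Real.log r)) (n : ℕ) (hn : n ≤ k + 1) : U.coeff n = 0 := by
  have key : ∀ n, n ≤ k + 2 → X ^ n ∣ U := by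
    intro n
    induction n with
    | zero => simp
    | succ n ih =>
      intro hn
      obtain ⟨R, hR⟩ := ih (by omega)
      have hlog : Tendsto (fun r : ℝ => r * Real.log r) (nhdsWithin 0 (Set.Ioi 0)) (nhds 0) := by
        have := Real.continuous_mul_log.tendsto 0
        simp only [zero_mul] at this
        exact this.mono_left nhdsWithin_le_nhds
      have hpow : Tendsto (fun r : ℝ => r ^ (2 * k + 2 - 2 * n) * (r * Real.log r))
          (nhdsWithin 0 (Set.Ioi 0)) (nhds 0) := by
        have h1 : Tendsto (fun r : ℝ => r ^ (2 * k + 2 - 2 * n)) (nhdsWithin 0 (Set.Ioi 0))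
            (nhds (0 ^ (2 * k + 2 - 2 * n))) :=
          ((continuous_pow _).tendsto 0).mono_left nhdsWithin_le_nhds
        simpa using h1.mul hlog
      have hRO : (fun r : ℝ => R.eval (r ^ 2)) =O[nhdsWithin 0 (Set.Ioi 0)]
          (fun r : ℝ => r ^ (2 * k + 2 - 2 * n) * (r * Real.log r)) := by
        have h3 := (isBigO_refl (fun r : ℝ => (r ^ (2 * n))⁻¹) (nhdsWithin 0 (Set.Ioi 0))).mul h
        refine h3.congr' ?_ ?_
        · filter_upwards [self_mem_nhdsWithin] with r hr
          have hr : (0 : ℝ) < r := hr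
          simp only [hR, eval_mul, eval_pow, eval_X]
          rw [← pow_mul]
          field_simp
        · filter_upwards [self_mem_nhdsWithin] with r hr
          have hr : (0 : ℝ) < r := hr
          have : 2 * k + 3 = 2 * n + (2 * k + 2 - 2 * n) + 1 := by omega
          rw [this, pow_add, pow_add]
          field_simp
      have h0 := hRO.trans_tendsto hpow
      have h1 : Tendsto (fun r : ℝ => R.eval (r ^ 2)) (nhdsWithin 0 (Set.Ioi 0))
          (nhds (R.eval (0 ^ 2))) :=
        ((R.continuous.comp (continuous_pow 2)).tendsto 0).mono_left nhdsWithin_le_nhds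
      have h2 := tendsto_nhds_unique h1 h0
      have h3 : X ∣ R := by
        rw [X_dvd_iff, coeff_zero_eq_eval_zero]; simpa using h2
      rw [hR, pow_succ]
      exact mul_dvd_mul_left _ h3
  exact X_pow_dvd_iff.1 (key (k + 2) le_rfl) n (by omega)

open Polynomial in
/-- The polynomial part of the ansatz. -/
noncomputable def BB (k : ℕ) (a : Fin k → ℝ) : ℝ[X] := 1 + ∑ l : Fin k, C (a l) * X ^ ((l : ℕ) + 1)

open Polynomial in
/-- The operator on polynomials. -/
noncomputable def LL (k : ℕ) (μ lam : ℝ) (P Q R : ℝ[X]) : ℝ[X] :=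
  C μ * (X * P) - (R - C lam * (X * R) + C (lam ^ 2 / 4) * (X ^ 2 * R))
    + C (2 * ((k : ℝ) + 1)) * (Q - C (lam ^ 2 / 4) * (X ^ 2 * Q))

open Polynomial in
lemma coeffs (k : ℕ) (μ lam : ℝ) (a : Fin k → ℝ) (c : ℝ)
    (h : (scalarJacobiOp k μ lam (ansatz k a c)) =O[nhdsWithin 0 (Set.Ioi 0)]
      (fun r : ℝ => r ^ (2 * k + 3) * Real.log r)) (n : ℕ) (hn : n ≤ k + 1) :
    (LL k μ lam (BB k a) (th (BB k a) + C c * X ^ (k + 1))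
      (th (th (BB k a) + C c * X ^ (k + 1)) + th (C c * X ^ (k + 1)))).coeff n = 0 := by
  set G : ℝ[X] := C c * X ^ (k + 1) with hG
  apply coeff_zero_of_isBigO k _ _ n hn
  have e0 : ∀ r, 0 < r → ansatz k a c r = FF (BB k a) G r := by
    intro r _
    simp only [ansatz, FF, BB, hG, eval_add, eval_one, eval_finsetSum, eval_mul, eval_C, eval_pow,
      eval_X, ← pow_mul]
    rfl
  have e1 := rDeriv_FF _ _ _ e0
  have e2 := rDeriv_FF _ _ _ e1
  have hthG : th G = C (2 * ((k : ℝ) + 1)) * G := by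
    ext j
    simp only [th_coeff, hG, coeff_C_mul, coeff_X_pow]
    split_ifs with hj
    · subst hj; push_cast; ring
    · ring
  have hththG : th (th G) = C ((2 * ((k : ℝ) + 1)) ^ 2) * G := by
    ext j
    simp only [th_coeff, hthG, hG, coeff_C_mul, coeff_X_pow]
    split_ifs with hj
    · subst hj; push_cast; ring
    · ring
  obtain ⟨W, hW⟩ : ∃ W : ℝ[X], ∀ r : ℝ, (LL k μ lam G (th G) (th (th G))).eval (r ^ 2)
      = r ^ (2 * k + 3) * (r * W.eval (r ^ 2)) := by
    refine ⟨C c * (C μ + C (lam * (2 * ((k : ℝ) + 1)) ^ 2)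
      - C (lam ^ 2 / 2 * (2 * ((k : ℝ) + 1)) ^ 2) * X), fun r => ?_⟩
    rw [hththG, hthG]
    simp only [LL, hG, eval_add, eval_sub, eval_mul, eval_C, eval_pow, eval_X]
    ring
  have hV : (fun r : ℝ => (LL k μ lam G (th G) (th (th G))).eval (r ^ 2) * Real.log r)
      =O[nhdsWithin 0 (Set.Ioi 0)] (fun r : ℝ => r ^ (2 * k + 3) * Real.log r) := by
    have hc : Continuous (fun r : ℝ => r * W.eval (r ^ 2)) := by fun_prop
    have h1 : (fun r : ℝ => r * W.eval (r ^ 2)) =O[nhdsWithin 0 (Set.Ioi 0)] (fun _ : ℝ => (1 : ℝ)) :=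
      ((hc.tendsto 0).mono_left nhdsWithin_le_nhds).isBigO_one ℝ
    have h2 := h1.mul (isBigO_refl (fun r : ℝ => r ^ (2 * k + 3) * Real.log r)
      (nhdsWithin 0 (Set.Ioi 0)))
    refine h2.congr (fun r => ?_) (fun r => by ring)
    rw [hW]; ring
  refine (h.sub hV).congr' ?_ (EventuallyEq.refl _ _)
  filter_upwards [self_mem_nhdsWithin] with r hr
  simp only [scalarJacobiOp]
  rw [e0 r hr, e1 r hr, e2 r hr]
  simp only [FF, LL, eval_add, eval_sub, eval_mul, eval_C, eval_pow, eval_X]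
  ring

open Polynomial in
lemma BB_zero (k : ℕ) (a : Fin k → ℝ) : (BB k a).coeff 0 = 1 := by
  simp [BB, coeff_zero_eq_eval_zero, eval_finsetSum]

open Polynomial in
lemma BB_last (k : ℕ) (a : Fin k → ℝ) : (BB k a).coeff (k + 1) = 0 := by
  simp only [BB, coeff_add, finsetSum_coeff, coeff_C_mul, coeff_X_pow, coeff_one]
  rw [Finset.sum_eq_zero]
  · simp
  · intro l _
    have := l.2
    rw [if_neg (by omega), mul_zero]

open Polynomial in
lemma rec1 (k : ℕ) (hk : 1 ≤ k) (μ lam : ℝ) (a : Fin k → ℝ) (c : ℝ)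
    (h : (scalarJacobiOp k μ lam (ansatz k a c)) =O[nhdsWithin 0 (Set.Ioi 0)]
      (fun r : ℝ => r ^ (2 * k + 3) * Real.log r)) :
    μ + 4 * k * (BB k a).coeff 1 = 0 := by
  have := coeffs k μ lam a c h (0 + 1) (by omega)
  have hk' : ¬ (k = 0) := by omega
  have hX : ∀ P : ℝ[X], (X ^ 2 * P).coeff (0 + 1) = 0 := by
    intro P; rw [coeff_X_pow_mul']; simp
  simp only [LL, coeff_add, coeff_sub, coeff_C_mul, coeff_X_mul, hX, th_coeff, coeff_X_pow,
    BB_zero] at this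
  simp [hk'] at this
  linarith

open Polynomial in
lemma rec2 (k : ℕ) (μ lam : ℝ) (a : Fin k → ℝ) (c : ℝ)
    (h : (scalarJacobiOp k μ lam (ansatz k a c)) =O[nhdsWithin 0 (Set.Ioi 0)]
      (fun r : ℝ => r ^ (2 * k + 3) * Real.log r)) (n : ℕ) (hn : n + 1 ≤ k) :
    (μ + 4 * lam * (n + 1) ^ 2) * (BB k a).coeff (n + 1)
      + 4 * (n + 2) * (k + 1 - (n + 2)) * (BB k a).coeff (n + 2)
      - lam ^ 2 * (n ^ 2 + n * (k + 1)) * (BB k a).coeff n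
      - (if n + 1 = k then 2 * (k + 1) * c else 0) = 0 := by
  have := coeffs k μ lam a c h (n + 1 + 1) (by omega)
  have hX : ∀ P : ℝ[X], (X ^ 2 * P).coeff (n + 1 + 1) = P.coeff n := by
    intro P; exact coeff_X_pow_mul P 2 n
  have h1 : ¬ (n = k) := by omega
  have h2 : ¬ (n = k + 1) := by omega
  simp only [LL, coeff_add, coeff_sub, coeff_C_mul, coeff_X_mul, hX, th_coeff, coeff_X_pow,
    if_neg h1, if_neg h2, add_left_inj] at this
  push_cast at this
  by_cases h3 : n + 1 = k
  · rw [if_pos h3] at this ⊢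
    subst h3
    push_cast at this ⊢
    linarith
  · rw [if_neg h3] at this ⊢
    linarith

/-- Homogeneity of the logarithmic coefficient: if `c` is the log-coefficient of the
asymptotic solution for data `(μ, λ)` and `c'` is that for `(tμ, tλ)` with `t ≠ 0`,
then `c' = t^{k+1} c`. -/
theorem log_coefficient_homogeneity (k : ℕ) (hk : 1 ≤ k) (t : ℝ) (ht : t ≠ 0)
    (μ lam : ℝ) (a a' : Fin k → ℝ) (c c' : ℝ)
    (h : (scalarJacobiOp k μ lam (ansatz k a c)) =O[nhdsWithin 0 (Set.Ioi 0)]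
      (fun r : ℝ => r ^ (2 * k + 3) * Real.log r))
    (h' : (scalarJacobiOp k (t * μ) (t * lam) (ansatz k a' c')) =O[nhdsWithin 0 (Set.Ioi 0)]
      (fun r : ℝ => r ^ (2 * k + 3) * Real.log r)) :
    c' = t ^ (k + 1) * c := by
  have r1 := rec1 k hk μ lam a c h
  have r1' := rec1 k hk _ _ a' c' h'
  have r2 := rec2 k μ lam a c h
  have r2' := rec2 k _ _ a' c' h'
  have hkR : (0 : ℝ) < k := by exact_mod_cast hk
  have key : ∀ n, (n ≤ k → (BB k a').coeff n = t ^ n * (BB k a).coeff n) ∧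
      (n + 1 ≤ k → (BB k a').coeff (n + 1) = t ^ (n + 1) * (BB k a).coeff (n + 1)) := by
    intro n
    induction n with
    | zero =>
      refine ⟨fun _ => by simp [BB_zero], fun _ => ?_⟩
      have : (4 * (k : ℝ)) * ((BB k a').coeff (0 + 1) - t ^ (0 + 1) * (BB k a).coeff (0 + 1)) = 0 := by
        simp only [zero_add, pow_one]
        linear_combination r1' - t * r1
      rcases mul_eq_zero.1 this with h0 | h0
      · linarith
      · linarith
    | succ n ih =>
      refine ⟨ih.2, fun hn => ?_⟩
      have i1 := ih.1 (by omega)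
      have i2 := ih.2 (by omega)
      have q := r2 n (by omega)
      have q' := r2' n (by omega)
      rw [if_neg (by omega)] at q q'
      rw [i1, i2] at q'
      have hnR : (n : ℝ) + 2 ≤ k := by exact_mod_cast hn
      have hn0 : (0 : ℝ) ≤ n := Nat.cast_nonneg n
      have hne : (4 * ((n : ℝ) + 2) * (k + 1 - (n + 2))) ≠ 0 := by
        apply mul_ne_zero <;> [skip; skip] <;> nlinarith
      apply mul_left_cancel₀ hne
      linear_combination q' - t ^ (n + 2) * q
  obtain ⟨n, rfl⟩ : ∃ n, k = n + 1 := ⟨k - 1, by omega⟩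
  have q := r2 n le_rfl
  have q' := r2' n le_rfl
  rw [if_pos rfl] at q q'
  have b := BB_last (n + 1) a
  have b' := BB_last (n + 1) a'
  rw [(key n).1 (by omega), (key n).2 le_rfl] at q'
  have hn0 : (0 : ℝ) ≤ n := Nat.cast_nonneg n
  have hne : (2 * (((n + 1 : ℕ) : ℝ) + 1)) ≠ 0 := by positivity
  apply mul_left_cancel₀ hne
  push_cast at q q' ⊢
  linear_combination -q' + t ^ (n + 2) * q
end

section
/- Let k ≥ 1 and j ≥ 0 be integers, and define P(j) = Π_{l=1}^{k+1} [ j(2k + j − 1) + (k + l − 1)(k − l) ]. Then P(j) ≥ 0 for all j ≥ 0; moreover P(j) = 0 if and only if j = 0 or j = 1, and P(j) > 0 for all j ≥ 2. -/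
/-- Spectral positivity for the second-variation operator at a totally geodesic
`S^{2k} ⊂ S^{2k+m}(1)`: with `P(j) = Π_{l=1}^{k+1}[j(2k+j−1) + (k+l−1)(k−l)]`, one has
`P(j) ≥ 0` for all `j`, `P(j) = 0` iff `j = 0` or `j = 1`, and `P(j) > 0` for `j ≥ 2`. -/
theorem spherical_eigenvalue_nonneg (k : ℕ) (hk : 1 ≤ k) (j : ℕ) :
    0 ≤ ∏ l ∈ Finset.Icc 1 (k + 1),
        ((j : ℤ) * (2 * (k : ℤ) + (j : ℤ) - 1) + ((k : ℤ) + (l : ℤ) - 1) * ((k : ℤ) - (l : ℤ))) ∧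
    ((∏ l ∈ Finset.Icc 1 (k + 1),
        ((j : ℤ) * (2 * (k : ℤ) + (j : ℤ) - 1) + ((k : ℤ) + (l : ℤ) - 1) * ((k : ℤ) - (l : ℤ)))
          = 0) ↔ (j = 0 ∨ j = 1)) ∧
    (2 ≤ j → 0 < ∏ l ∈ Finset.Icc 1 (k + 1),
        ((j : ℤ) * (2 * (k : ℤ) + (j : ℤ) - 1) + ((k : ℤ) + (l : ℤ) - 1) * ((k : ℤ) - (l : ℤ)))) := by
  have hpos : 2 ≤ j → 0 < ∏ l ∈ Finset.Icc 1 (k + 1),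
        ((j : ℤ) * (2 * (k : ℤ) + (j : ℤ) - 1) +
          ((k : ℤ) + (l : ℤ) - 1) * ((k : ℤ) - (l : ℤ))) := by
    intro hj
    apply Finset.prod_pos
    intro l hl
    rw [Finset.mem_Icc] at hl
    have h1 : (0 : ℤ) < (j : ℤ) + k - l := by omega
    have h2 : (0 : ℤ) < (j : ℤ) + k + l - 1 := by omega
    have h3 := mul_pos h1 h2
    linarith
  have hzero : (j = 0 ∨ j = 1) → ∏ l ∈ Finset.Icc 1 (k + 1),
        ((j : ℤ) * (2 * (k : ℤ) + (j : ℤ) - 1) +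
          ((k : ℤ) + (l : ℤ) - 1) * ((k : ℤ) - (l : ℤ))) = 0 := by
    rintro (rfl | rfl)
    · apply Finset.prod_eq_zero (i := k)
      · rw [Finset.mem_Icc]; omega
      · simp
    · apply Finset.prod_eq_zero (i := k + 1)
      · rw [Finset.mem_Icc]; omega
      · push_cast; ring
  have hcase : (j = 0 ∨ j = 1) ∨ 2 ≤ j := by omega
  refine ⟨?_, ⟨?_, hzero⟩, hpos⟩
  · rcases hcase with h | h
    · exact (hzero h).ge
    · exact (hpos h).le
  · intro h
    rcases hcase with h' | h'
    · exact h'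
    · exact absurd h (hpos h').ne'
end

section
/- Let d₁, d₂ ≥ 1 be integers with d₁ + d₂ = 2k, set r_i = √(d_i/(2k)), and write ℝ^{2k+2} = ℝ^{d₁+1} ⊕ ℝ^{d₂+1}, x = (x₁, x₂). Let Σ = {x : |x₁| = r₁ and |x₂| = r₂} and μ(x) = (d₂ x₁, −d₁ x₂). For a real skew-symmetric (2k+2) × (2k+2) matrix A and b ∈ ℝ^{2k+2}, one has ⟨A x − ⟨b, x⟩ x + b, μ(x)⟩ = 0 for every x ∈ Σ if and only if b = 0 and A is block diagonal with respect to the decomposition ℝ^{d₁+1} ⊕ ℝ^{d₂+1} (i.e., A(ℝ^{d₁+1} ⊕ 0) ⊆ ℝ^{d₁+1} ⊕ 0 and A(0 ⊕ ℝ^{d₂+1}) ⊆ 0 ⊕ ℝ^{d₂+1}). -/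
open Matrix

lemma skew_quad_zero {n : ℕ} (B : Fin n → Fin n → ℝ) (hB : ∀ i j, B j i = -B i j) (y : Fin n → ℝ) :
    ∑ i, (∑ j, B i j * y j) * y i = 0 := by
  have h : ∑ i, (∑ j, B i j * y j) * y i = -∑ i, (∑ j, B i j * y j) * y i := by
    simp only [Finset.sum_mul, ← Finset.sum_neg_distrib]
    rw [Finset.sum_comm]
    refine Finset.sum_congr rfl fun i _ => Finset.sum_congr rfl fun j _ => ?_
    rw [hB i j]; ring
  linarith

/-- Kernel of the restriction-projection map at a Clifford hypersurface
`Σ = S^{d₁}(r₁) × S^{d₂}(r₂) ⊂ S^{2k+1}(1)` (with `r_i = √(d_i/(2k))`, normal frame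
`μ(x) = (d₂x₁, −d₁x₂)`): for `A` skew-symmetric and `b ∈ ℝ^{2k+2}`, one has
`⟨Ax − ⟨b,x⟩x + b, μ(x)⟩ = 0` for all `x ∈ Σ` iff `b = 0` and `A` is block diagonal
with respect to `ℝ^{2k+2} = ℝ^{d₁+1} ⊕ ℝ^{d₂+1}`. -/
theorem clifford_restriction_projection_kernel (d₁ d₂ k : ℕ) (h₁ : 1 ≤ d₁) (h₂ : 1 ≤ d₂)
    (hk : d₁ + d₂ = 2 * k)
    (A : Matrix (Fin (d₁ + 1) ⊕ Fin (d₂ + 1)) (Fin (d₁ + 1) ⊕ Fin (d₂ + 1)) ℝ)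
    (hA : Aᵀ = -A) (b : (Fin (d₁ + 1) ⊕ Fin (d₂ + 1)) → ℝ) :
    (∀ x : (Fin (d₁ + 1) ⊕ Fin (d₂ + 1)) → ℝ,
        (∑ i, x (Sum.inl i) ^ 2 = (d₁ : ℝ) / (2 * k)) →
        (∑ i, x (Sum.inr i) ^ 2 = (d₂ : ℝ) / (2 * k)) →
        (A.mulVec x - (b ⬝ᵥ x) • x + b) ⬝ᵥ
          (Sum.elim (fun i => (d₂ : ℝ) * x (Sum.inl i))
            (fun i => -(d₁ : ℝ) * x (Sum.inr i))) = 0)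
      ↔ (b = 0 ∧ (∀ i j, A (Sum.inl i) (Sum.inr j) = 0)
          ∧ (∀ i j, A (Sum.inr j) (Sum.inl i) = 0)) := by
  have hs : ∀ i j, A j i = -A i j := fun i j => by
    have := congrFun (congrFun hA i) j
    simpa using this
  have hkn : 0 < k := by omega
  have hkp : (0 : ℝ) < k := by exact_mod_cast hkn
  have hd1 : (0 : ℝ) < d₁ := by exact_mod_cast h₁
  have hd2 : (0 : ℝ) < d₂ := by exact_mod_cast h₂
  have hkr : (d₁ : ℝ) + d₂ = 2 * k := by exact_mod_cast hk
  constructor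
  · intro H
    have key : ∀ i j, ∀ s t : ℝ, s ^ 2 = (d₁ : ℝ) / (2 * k) → t ^ 2 = (d₂ : ℝ) / (2 * k) →
        (2 * k) * (s * t * A (Sum.inl i) (Sum.inr j)) + d₂ * (b (Sum.inl i) * s)
          - d₁ * (b (Sum.inr j) * t) = 0 := by
      intro i j s t hs' ht'
      have h := H (Sum.elim (Pi.single i s) (Pi.single j t))
        (by simpa [Pi.single_apply, ite_pow] using hs')
        (by simpa [Pi.single_apply, ite_pow] using ht')
      simp [dotProduct, Matrix.mulVec, Fintype.sum_sum_type, Pi.single_apply] at h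
      have e1 : A (Sum.inl i) (Sum.inl i) = 0 := by linarith [hs (Sum.inl i) (Sum.inl i)]
      have e2 : A (Sum.inr j) (Sum.inr j) = 0 := by linarith [hs (Sum.inr j) (Sum.inr j)]
      rw [e1, e2, hs (Sum.inl i) (Sum.inr j)] at h
      have e3 : d₂ * s ^ 2 = d₁ * t ^ 2 := by rw [hs', ht']; ring
      rw [← hkr]
      linear_combination h + (b (Sum.inl i) * s + b (Sum.inr j) * t) * e3
    have hr1 : 0 < (d₁ : ℝ) / (2 * k) := by positivity
    have hr2 : 0 < (d₂ : ℝ) / (2 * k) := by positivity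
    obtain ⟨s, hsp, hs2⟩ : ∃ s : ℝ, 0 < s ∧ s ^ 2 = (d₁ : ℝ) / (2 * k) :=
      ⟨_, Real.sqrt_pos.2 hr1, Real.sq_sqrt hr1.le⟩
    obtain ⟨t, htp, ht2⟩ : ∃ t : ℝ, 0 < t ∧ t ^ 2 = (d₂ : ℝ) / (2 * k) :=
      ⟨_, Real.sqrt_pos.2 hr2, Real.sq_sqrt hr2.le⟩
    have main : ∀ i j, A (Sum.inl i) (Sum.inr j) = 0 ∧ b (Sum.inl i) = 0 ∧ b (Sum.inr j) = 0 := by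
      intro i j
      have k1 := key i j s t hs2 ht2
      have k2 := key i j (-s) t (by rw [neg_sq, hs2]) ht2
      have k3 := key i j s (-t) hs2 (by rw [neg_sq, ht2])
      have k4 := key i j (-s) (-t) (by rw [neg_sq, hs2]) (by rw [neg_sq, ht2])
      have z1 : (2 * k * s * t) * A (Sum.inl i) (Sum.inr j) = 0 := by
        linear_combination (k1 - k2 - k3 + k4) / 4
      have z2 : (d₂ * s) * b (Sum.inl i) = 0 := by
        linear_combination (k1 - k2 + k3 - k4) / 4
      have z3 : (d₁ * t) * b (Sum.inr j) = 0 := by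
        linear_combination (-k1 - k2 + k3 + k4) / 4
      exact ⟨(mul_eq_zero.1 z1).resolve_left (by positivity),
        (mul_eq_zero.1 z2).resolve_left (by positivity),
        (mul_eq_zero.1 z3).resolve_left (by positivity)⟩
    refine ⟨?_, fun i j => (main i j).1, fun i j => ?_⟩
    · funext z
      rcases z with i | j
      · exact (main i 0).2.1
      · exact (main 0 j).2.2
    · rw [hs (Sum.inl i) (Sum.inr j), (main i j).1, neg_zero]
  · rintro ⟨rfl, hl, hr⟩ x - -
    have q1 := skew_quad_zero (fun i j => A (Sum.inl i) (Sum.inl j)) (fun i j => hs _ _)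
      (fun i => x (Sum.inl i))
    have q2 := skew_quad_zero (fun i j => A (Sum.inr i) (Sum.inr j)) (fun i j => hs _ _)
      (fun i => x (Sum.inr i))
    simp only [dotProduct, Matrix.mulVec, Fintype.sum_sum_type, Pi.add_apply, Pi.sub_apply,
      Pi.smul_apply, Pi.zero_apply, zero_mul, Finset.sum_const_zero, add_zero, zero_smul, sub_zero,
      Sum.elim_inl, Sum.elim_inr, hl, hr, zero_add, mul_left_comm _ (d₂ : ℝ),
      mul_left_comm _ (-(d₁ : ℝ)), ← Finset.mul_sum, q1, q2, mul_zero]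
end

section
/- For an integer k ≥ 1, define N_k = Π_{l=1}^{k+1} [ (k + l)(k − l + 1) − 4k ]. Then: N_k > 0 if and only if k = 1; N_k = 0 if and only if k = 3; and N_k < 0 if and only if k = 2 or k ≥ 4. -/
/-- Sign of `N_k = Π_{l=1}^{k+1}[(k+l)(k−l+1) − 4k]`, the eigenvalue on constants of the
second-variation operator of the Graham–Witten energy at a Clifford hypersurface:
`N_k > 0` iff `k = 1`, `N_k = 0` iff `k = 3`, and `N_k < 0` iff `k = 2` or `k ≥ 4`. -/
theorem clifford_constant_eigenvalue_sign (k : ℕ) (hk : 1 ≤ k) :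
    (0 < ∏ l ∈ Finset.Icc 1 (k + 1),
        (((k : ℤ) + (l : ℤ)) * ((k : ℤ) - (l : ℤ) + 1) - 4 * (k : ℤ)) ↔ k = 1) ∧
    ((∏ l ∈ Finset.Icc 1 (k + 1),
        (((k : ℤ) + (l : ℤ)) * ((k : ℤ) - (l : ℤ) + 1) - 4 * (k : ℤ)) = 0) ↔ k = 3) ∧
    (∏ l ∈ Finset.Icc 1 (k + 1),
        (((k : ℤ) + (l : ℤ)) * ((k : ℤ) - (l : ℤ) + 1) - 4 * (k : ℤ)) < 0
      ↔ (k = 2 ∨ 4 ≤ k)) := by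
  rcases Nat.lt_or_ge k 4 with h | h
  · interval_cases k <;> decide
  · obtain ⟨m, rfl⟩ : ∃ m, k = m + 4 := ⟨k - 4, by omega⟩
    have key : ∏ l ∈ Finset.Icc 1 (m + 4 + 1),
        ((((m + 4 : ℕ) : ℤ) + (l : ℤ)) * (((m + 4 : ℕ) : ℤ) - (l : ℤ) + 1)
          - 4 * ((m + 4 : ℕ) : ℤ)) < 0 := by
      rw [Finset.prod_Icc_succ_top (by omega), Finset.prod_Icc_succ_top (by omega),
        Finset.prod_Icc_succ_top (by omega)]
      have hp : 0 < ∏ l ∈ Finset.Icc 1 (m + 2),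
          ((((m + 4 : ℕ) : ℤ) + (l : ℤ)) * (((m + 4 : ℕ) : ℤ) - (l : ℤ) + 1)
            - 4 * ((m + 4 : ℕ) : ℤ)) := by
        apply Finset.prod_pos
        intro l hl
        rw [Finset.mem_Icc] at hl
        obtain ⟨h1, h2⟩ := hl
        have h1' : (1 : ℤ) ≤ l := by exact_mod_cast h1
        have h2' : (l : ℤ) ≤ m + 2 := by exact_mod_cast h2
        push_cast
        nlinarith [mul_nonneg (sub_nonneg.2 h2') (by linarith : (0 : ℤ) ≤ m + 2 + l - 1)]
      refine mul_neg_of_pos_of_neg (mul_pos_of_neg_of_neg (mul_neg_of_pos_of_neg hp ?_) ?_) ?_ <;>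
        · push_cast
          ring_nf
          omega
    refine ⟨⟨fun h' => absurd h' (by omega), fun h' => by omega⟩,
      ⟨fun h' => absurd h' key.ne, fun h' => by omega⟩, ⟨fun _ => Or.inr h, fun _ => key⟩⟩
end
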